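/- For every Schwartz function φ : ℝ³ → ℂ and every ε > 0, the function x ↦ K(x)·(𝓕φ)(x) is integrable on {x ∈ ℝ³ : |x| ≥ ε}, and lim_{ε→0⁺} ∫_{|x| ≥ ε} K(x) (𝓕φ)(x) dx = ∫_{ℝ³} m(ξ) φ(ξ) dξ. In other words, the Fourier transform of the dipolar kernel K, taken in the sense of tempered distributions with K understood as a principal value, is the function m(ξ) = (4π/3)(2ξ₃² − ξ₂² − ξ₁²)/|ξ|². -/

import Mathlib

open MeasureTheory FourierTransform SchwartzMap Filter

noncomputable section

-- The dipolar symbol `m(ξ) = (4π/3)(2ξ₃² − ξ₂² − ξ₁²)/|ξ|²`, with `m(0) := 0`.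
open Classical in
def dipm (ξ : EuclideanSpace ℝ (Fin 3)) : ℝ :=
  if ξ = 0 then 0
  else (4 * Real.pi / 3) * (2 * (ξ 2) ^ 2 - (ξ 1) ^ 2 - (ξ 0) ^ 2) / ‖ξ‖ ^ 2

-- The dipolar kernel `K(x) = (x₁² + x₂² − 2x₃²)/|x|⁵` (understood away from the origin).
def dipK (x : EuclideanSpace ℝ (Fin 3)) : ℝ :=
  ((x 0) ^ 2 + (x 1) ^ 2 - 2 * (x 2) ^ 2) / ‖x‖ ^ 5

open scoped LineDeriv

lemma smulLeftCLM_inner_apply {V : Type*} [NormedAddCommGroup V] [InnerProductSpace ℝ V]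
    (ψ : 𝓢(V, ℂ)) (v x : V) :
    smulLeftCLM ℂ (fun x => inner ℝ x v) ψ x = (inner ℝ x v : ℂ) * ψ x := by
  rw [smulLeftCLM_apply_apply (by fun_prop)]
  simp

section Gaussian

variable {V : Type*} [NormedAddCommGroup V] [InnerProductSpace ℝ V] [FiniteDimensional ℝ V]
  [MeasurableSpace V] [BorelSpace V]

lemma integrable_gaussian_mul {s : ℝ} (hs : 0 ≤ s) {f : V → ℂ} (hf : Integrable f) :
    Integrable (fun x => (Real.exp (-(s * ‖x‖ ^ 2)) : ℂ) * f x) := by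
  refine hf.bdd_mul (c := 1) (by fun_prop) (ae_of_all _ fun x => ?_)
  rw [Complex.norm_real, Real.norm_of_nonneg (Real.exp_nonneg _),
    Real.exp_le_one_iff]
  nlinarith [mul_nonneg hs (sq_nonneg ‖x‖)]

lemma integral_gaussian_mul_lineDerivOp {s : ℝ} (hs : 0 ≤ s) (ψ : 𝓢(V, ℂ)) (v : V) :
    ∫ x, (Real.exp (-(s * ‖x‖ ^ 2)) : ℂ) * ∂_{v} ψ x =
      2 * s * ∫ x, (Real.exp (-(s * ‖x‖ ^ 2)) : ℂ) *
        smulLeftCLM ℂ (fun x => inner ℝ x v) ψ x := by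
  have key := integral_bilinear_hasLineDerivAt_right_eq_neg_left_of_integrable
    (μ := (volume : Measure V)) (B := ContinuousLinearMap.mul ℝ ℂ) (v := v)
    (f := fun x : V => (Real.exp (-(s * ‖x‖ ^ 2)) : ℂ))
    (f' := fun x : V => -(2 * s) * ((Real.exp (-(s * ‖x‖ ^ 2)) : ℂ) * (inner ℝ x v : ℝ)))
    (g := ψ) (g' := ⇑(∂_{v} ψ : 𝓢(V, ℂ))) ?_ ?_ ?_ ?_ ?_
  · simp only [ContinuousLinearMap.mul_apply'] at key
    rw [key, ← integral_const_mul, ← integral_neg]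
    refine integral_congr_ae (ae_of_all _ fun x => ?_)
    simp only [smulLeftCLM_inner_apply]
    ring
  · have := (integrable_gaussian_mul hs
      (smulLeftCLM ℂ (fun x => inner ℝ x v) ψ).integrable).const_mul (-(2 * s) : ℂ)
    refine this.congr (ae_of_all _ fun x => ?_)
    simp only [smulLeftCLM_inner_apply, ContinuousLinearMap.mul_apply']
    ring
  · exact integrable_gaussian_mul hs (∂_{v} ψ).integrable
  · exact integrable_gaussian_mul hs ψ.integrable
  · intro x _
    have h1 : HasFDerivAt (fun x : V => Real.exp (-(s * ‖x‖ ^ 2))) _ x :=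
      (((hasStrictFDerivAt_norm_sq x).hasFDerivAt.const_mul s).neg).exp
    have h2 := (Complex.ofRealCLM.hasFDerivAt.comp x h1).hasLineDerivAt v
    convert! h2 using 1
    simp [real_inner_comm]
    ring
  · intro x _
    simpa [lineDerivOp_apply_eq_fderiv] using (ψ.hasFDerivAt x).hasLineDerivAt v

lemma integral_gaussian_mul_lineDerivOp_lineDerivOp {s : ℝ} (hs : 0 ≤ s) (ψ : 𝓢(V, ℂ)) (v : V) :
    ∫ x, (Real.exp (-(s * ‖x‖ ^ 2)) : ℂ) * ∂_{v} (∂_{v} ψ) x =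
      4 * s ^ 2 * (∫ x, (Real.exp (-(s * ‖x‖ ^ 2)) : ℂ) * ((inner ℝ x v : ℝ) ^ 2 * ψ x)) -
      2 * s * ‖v‖ ^ 2 * ∫ x, (Real.exp (-(s * ‖x‖ ^ 2)) : ℂ) * ψ x := by
  set χ := smulLeftCLM ℂ (fun x => inner ℝ x v) ψ with hχ
  have h1 (x : V) : smulLeftCLM ℂ (fun x => inner ℝ x v) (∂_{v} ψ) x
      = ∂_{v} χ x - ‖v‖ ^ 2 * ψ x := by
    have hd : HasFDerivAt (fun x : V => (inner ℝ x v : ℝ)) (innerSL ℝ v) x := by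
      simpa [real_inner_comm] using! (innerSL ℝ v).hasFDerivAt (x := x)
    have h2 : HasLineDerivAt ℝ χ _ x v :=
      (((Complex.ofRealCLM.hasFDerivAt.comp x hd).mul (ψ.hasFDerivAt x)).congr_of_eventuallyEq
        (Eventually.of_forall fun y => smulLeftCLM_inner_apply ψ v y)).hasLineDerivAt v
    rw [lineDerivOp_apply v χ, h2.lineDeriv, smulLeftCLM_inner_apply,
      lineDerivOp_apply_eq_fderiv]
    simp
    ring
  rw [integral_gaussian_mul_lineDerivOp hs, integral_congr_ae (ae_of_all _ fun x => by
    simp only [h1, mul_sub]; rfl), integral_sub (integrable_gaussian_mul hs (∂_{v} χ).integrable)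
    (integrable_gaussian_mul hs (ψ.integrable.const_mul _)), integral_gaussian_mul_lineDerivOp hs,
    integral_congr_ae (g := fun x => (Real.exp (-(s * ‖x‖ ^ 2)) : ℂ) *
      ((inner ℝ x v : ℝ) ^ 2 * ψ x)) (ae_of_all _ fun x => by
        simp only [smulLeftCLM_inner_apply, hχ]; ring)]
  simp only [mul_left_comm _ ((‖v‖ : ℂ) ^ 2), integral_const_mul]
  ring

lemma fourier_lineDerivOp_lineDerivOp_apply (ψ : 𝓢(V, ℂ)) (v x : V) :
    𝓕 (∂_{v} (∂_{v} ψ)) x = -(4 * Real.pi ^ 2) * ((inner ℝ x v : ℝ) ^ 2 * 𝓕 ψ x) := by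
  simp only [fourier_lineDerivOp_eq, smul_apply, smulLeftCLM_inner_apply, smul_eq_mul]
  linear_combination (4 * Real.pi ^ 2 * (inner ℝ x v : ℂ) ^ 2 * 𝓕 ψ x) * Complex.I_sq

lemma integral_gaussian_mul_fourier {t : ℝ} (ht : 0 < t) (ψ : 𝓢(V, ℂ)) :
    ∫ x, (Real.exp (-(Real.pi * t * ‖x‖ ^ 2)) : ℂ) * 𝓕 ψ x =
      ((t ^ (-(Module.finrank ℝ V / 2 : ℝ)) : ℝ) : ℂ) *
        ∫ ξ, (Real.exp (-(Real.pi / t * ‖ξ‖ ^ 2)) : ℂ) * ψ ξ := by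
  have hb : 0 < ((Real.pi * t : ℝ) : ℂ).re := by
    rw [Complex.ofReal_re]; positivity
  have hg : Integrable (fun x : V => (Real.exp (-(Real.pi * t * ‖x‖ ^ 2)) : ℂ)) := by
    simpa using! GaussianFourier.integrable_cexp_neg_mul_sq_norm_add hb 0 (0 : V)
  have hF (ξ : V) : 𝓕 (fun x : V => (Real.exp (-(Real.pi * t * ‖x‖ ^ 2)) : ℂ)) ξ =
      ((t ^ (-(Module.finrank ℝ V / 2 : ℝ)) : ℝ) : ℂ) *
        (Real.exp (-(Real.pi / t * ‖ξ‖ ^ 2)) : ℂ) := by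
    have := fourier_gaussian_innerProductSpace hb ξ
    simp only [Complex.ofReal_exp]
    convert! this using 2
    · ext x; push_cast; ring_nf
    · have : (Real.pi / (Real.pi * t : ℝ) : ℂ) = ((t⁻¹ : ℝ) : ℂ) := by
        push_cast
        have := Real.pi_ne_zero
        field_simp
      rw [this, Real.rpow_neg ht.le, ← Real.inv_rpow ht.le,
        Complex.ofReal_cpow (inv_nonneg.2 ht.le)]
      push_cast
      rfl
    · push_cast
      have := Complex.ofReal_ne_zero.2 Real.pi_ne_zero
      have := Complex.ofReal_ne_zero.2 ht.ne'
      field_simp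
  have := VectorFourier.integral_fourierIntegral_smul_eq_flip (L := innerₗ V)
    Real.continuous_fourierChar continuous_inner hg (ψ.integrable (μ := volume))
  rw [← integral_const_mul]
  simp only [flip_innerₗ, smul_eq_mul] at this
  refine this.symm.trans (integral_congr_ae (ae_of_all _ fun ξ => ?_))
  change _ = (_ : ℂ) * (_ * _)
  rw [← mul_assoc, ← hF]
  rfl

end Gaussian

/-- Fubini's theorem for integrals against a superposition `κ x = ∫ t in (0, ∞), k x t` of
nonnegative functions. -/
lemma integral_superposition_swap {X : Type*} [MeasurableSpace X] {μ : Measure X} [SFinite μ]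
    {k : X → ℝ → ℝ} {κ : X → ℝ} {a : X → ℂ} (hk : Measurable (Function.uncurry k))
    (hk0 : ∀ x t, 0 < t → 0 ≤ k x t) (hki : ∀ᵐ x ∂μ, IntegrableOn (k x) (Set.Ioi 0))
    (hκ : ∀ᵐ x ∂μ, ∫ t in Set.Ioi 0, k x t = κ x) (ha : AEStronglyMeasurable a μ)
    (hκa : Integrable (fun x => (κ x : ℂ) * a x) μ) :
    ∫ x, (κ x : ℂ) * a x ∂μ = ∫ t in Set.Ioi (0 : ℝ), ∫ x, (k x t : ℂ) * a x ∂μ := by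
  have hint : Integrable (Function.uncurry fun x t => (k x t : ℂ) * a x)
      (μ.prod (volume.restrict (Set.Ioi 0))) := by
    refine (integrable_prod_iff ?_).2 ⟨?_, ?_⟩
    · have h : AEStronglyMeasurable (fun p : X × ℝ => (k p.1 p.2 : ℂ))
          (μ.prod (volume.restrict (Set.Ioi 0))) :=
        (Complex.measurable_ofReal.comp hk).aestronglyMeasurable
      exact h.mul (g := fun p => a p.1) ha.comp_fst
    · filter_upwards [hki] with x hx
      exact (hx.ofReal (𝕜 := ℂ)).mul_const (a x)
    · refine hκa.norm.congr ?_
      filter_upwards [hκ] with x hx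
      rw [← hx, norm_mul, Complex.norm_real,
        Real.norm_of_nonneg (setIntegral_nonneg measurableSet_Ioi (hk0 x)), ← integral_mul_const]
      refine setIntegral_congr_fun measurableSet_Ioi fun t ht => ?_
      simp [abs_of_nonneg (hk0 x t ht)]
  rw [← integral_integral_swap hint]
  refine integral_congr_ae ?_
  filter_upwards [hκ] with x hx
  rw [integral_mul_const, integral_complex_ofReal, hx]

lemma integral_rpow_mul_exp_neg_pi {r : ℝ} (hr : 0 < r) :
    IntegrableOn (fun t : ℝ => t ^ (3 / 2 : ℝ) * Real.exp (-(Real.pi * t * r ^ 2))) (Set.Ioi 0) ∧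
    ∫ t in Set.Ioi (0 : ℝ), t ^ (3 / 2 : ℝ) * Real.exp (-(Real.pi * t * r ^ 2)) =
      3 / (4 * Real.pi ^ 2) / r ^ 5 := by
  have hb : 0 < Real.pi * r ^ 2 := by positivity
  constructor
  · refine (integrableOn_rpow_mul_exp_neg_mul_rpow (p := 1) (s := 3 / 2) (by norm_num) one_pos
      hb).congr_fun (fun t _ => ?_) measurableSet_Ioi
    simp only [Real.rpow_one]
    ring_nf
  · have h := Real.integral_rpow_mul_exp_neg_mul_Ioi (a := 5 / 2) (by norm_num) hb
    have hG : Real.Gamma (5 / 2) = 3 / 4 * √Real.pi := by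
      have := Real.Gamma_nat_add_half 2
      norm_num [Nat.doubleFactorial] at this ⊢
      linarith
    have hp : (1 / (Real.pi * r ^ 2)) ^ (5 / 2 : ℝ) = 1 / (√Real.pi ^ 5 * r ^ 5) := by
      have : 1 / (Real.pi * r ^ 2) = (1 / (√Real.pi * r)) ^ (2 : ℝ) := by
        rw [Real.rpow_two, div_pow, mul_pow, Real.sq_sqrt Real.pi_pos.le, one_pow]
      rw [this, ← Real.rpow_mul (by positivity)]
      rw [show (2 * (5 / 2) : ℝ) = (5 : ℕ) by norm_num, Real.rpow_natCast, div_pow, mul_pow,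
        one_pow]
    rw [hG, hp] at h
    calc _ = ∫ t in Set.Ioi (0 : ℝ), t ^ (5 / 2 - 1 : ℝ) * Real.exp (-(Real.pi * r ^ 2 * t)) := by
          norm_num [mul_right_comm, mul_assoc, mul_comm]
      _ = _ := by
          rw [h]
          have h2 := Real.sq_sqrt Real.pi_pos.le
          have : √Real.pi ≠ 0 := by positivity
          rw [show √Real.pi ^ 5 = Real.pi ^ 2 * √Real.pi by rw [← h2]; ring_nf; rw [h2]; ring_nf]
          field_simp

lemma integral_rpow_neg_two_mul_exp_neg_pi_div {r : ℝ} (hr : 0 < r) :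
    IntegrableOn (fun t : ℝ => t ^ (-2 : ℝ) * Real.exp (-(Real.pi / t * r ^ 2))) (Set.Ioi 0) ∧
    ∫ t in Set.Ioi (0 : ℝ), t ^ (-2 : ℝ) * Real.exp (-(Real.pi / t * r ^ 2)) =
      1 / (Real.pi * r ^ 2) := by
  have hb : 0 < Real.pi * r ^ 2 := by positivity
  have heq : (fun t : ℝ => t ^ (-2 : ℝ) * Real.exp (-(Real.pi / t * r ^ 2))) =
      fun t : ℝ => (|(-1 : ℝ)| * t ^ (-1 - 1 : ℝ)) •
        Real.exp (-(Real.pi * r ^ 2) * (t ^ (-1 : ℝ))) := by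
    ext t
    rw [Real.rpow_neg_one]
    norm_num
    left
    ring
  rw [heq, integrableOn_Ioi_comp_rpow_iff (fun y => Real.exp (-(Real.pi * r ^ 2) * y))
    (by norm_num), integral_comp_rpow_Ioi (fun y => Real.exp (-(Real.pi * r ^ 2) * y))
    (by norm_num)]
  refine ⟨exp_neg_integrableOn_Ioi 0 hb, ?_⟩
  rw [integral_exp_mul_Ioi (by linarith)]
  simp

/-- The harmonic polynomial `x₁² + x₂² − 2x₃²` in the numerator of the dipolar kernel. -/
def dipoleNumerator (x : EuclideanSpace ℝ (Fin 3)) : ℝ := x 0 ^ 2 + x 1 ^ 2 - 2 * x 2 ^ 2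

lemma continuous_dipoleNumerator : Continuous dipoleNumerator := by
  unfold dipoleNumerator
  fun_prop

lemma abs_dipoleNumerator_le (x : EuclideanSpace ℝ (Fin 3)) :
    |dipoleNumerator x| ≤ 2 * ‖x‖ ^ 2 := by
  rw [EuclideanSpace.real_norm_sq_eq, Fin.sum_univ_three, dipoleNumerator, abs_le]
  constructor <;> nlinarith [sq_nonneg (x 0), sq_nonneg (x 1), sq_nonneg (x 2)]

/-- No integrability is needed: otherwise the Bochner integral vanishes by convention. -/
lemma integral_dipoleNumerator_mul_radial (h : ℝ → ℂ) :
    ∫ x, (dipoleNumerator x : ℂ) * h ‖x‖ = 0 := by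
  set F : EuclideanSpace ℝ (Fin 3) → ℂ := fun x => (dipoleNumerator x : ℂ) * h ‖x‖
  by_cases hF : Integrable F
  · let e := LinearIsometryEquiv.piLpCongrLeft 2 ℝ ℝ (finRotate 3)
    have hm := e.measurePreserving
    have he := e.toMeasurableEquiv.measurableEmbedding
    have hI1 : ∫ x, F (e x) = ∫ x, F x := hm.integral_comp he F
    have hI2 : ∫ x, F (e (e x)) = ∫ x, F x :=
      (hm.integral_comp he (F ∘ e)).trans hI1
    have hF1 : Integrable (fun x => F (e x)) := (hm.integrable_comp_emb he).2 hF
    have hF2 : Integrable (fun x => F (e (e x))) := (hm.integrable_comp_emb he).2 hF1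
    have hsum : ∫ x, (F x + F (e x) + F (e (e x))) = 0 := by
      refine integral_eq_zero_of_ae (ae_of_all _ fun x => ?_)
      have h0 (x : EuclideanSpace ℝ (Fin 3)) : e x 0 = x 2 := rfl
      have h1 (x : EuclideanSpace ℝ (Fin 3)) : e x 1 = x 0 := rfl
      have h2 (x : EuclideanSpace ℝ (Fin 3)) : e x 2 = x 1 := rfl
      simp only [F, dipoleNumerator, e.norm_map, h0, h1, h2, Pi.zero_apply]
      push_cast
      ring
    rw [integral_add (f := fun x => F x + F (e x)) (hF.add hF1) hF2, integral_add hF hF1, hI1, hI2] at hsum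
    have : (3 : ℂ) * ∫ x, F x = 0 := by rw [← hsum]; ring
    simpa using this
  · exact integral_undef hF

lemma abs_dipK_le (x : EuclideanSpace ℝ (Fin 3)) : |dipK x| ≤ 2 * ‖x‖ ^ (-3 : ℤ) := by
  rcases eq_or_ne x 0 with rfl | hx
  · simp [dipK]
  · have hx : 0 < ‖x‖ := norm_pos_iff.2 hx
    have := abs_dipoleNumerator_le x
    rw [dipK, abs_div, abs_of_pos (pow_pos hx 5), div_le_iff₀ (pow_pos hx 5)]
    calc _ ≤ 2 * ‖x‖ ^ 2 := this
      _ = _ := by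
        rw [zpow_neg]; norm_cast; field_simp

lemma measurable_dipK : Measurable dipK :=
  (continuous_dipoleNumerator.measurable).div (by fun_prop)

lemma integrable_indicator_norm_zpow_neg_two :
    Integrable ((Metric.closedBall (0 : EuclideanSpace ℝ (Fin 3)) 1).indicator
      fun x => ‖x‖ ^ (-2 : ℤ)) := by
  have h : Integrable (fun x : EuclideanSpace ℝ (Fin 3) =>
      (Set.Iic (1 : ℝ)).indicator (fun r => r ^ (-2 : ℤ)) ‖x‖) := by
    refine (integrable_fun_norm_addHaar volume
      (f := (Set.Iic (1 : ℝ)).indicator (fun r => r ^ (-2 : ℤ)))).2 ?_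
    have : IntegrableOn ((Set.Iic (1 : ℝ)).indicator fun _ => (1 : ℝ)) (Set.Ioi 0) := by
      rw [IntegrableOn, integrable_indicator_iff measurableSet_Iic, IntegrableOn,
        Measure.restrict_restrict measurableSet_Iic, Set.inter_comm, Set.Ioi_inter_Iic]
      exact integrableOn_const (by simp)
    refine this.congr_fun (fun r hr => ?_) measurableSet_Ioi
    have hr : 0 < r := hr
    by_cases h1 : r ≤ 1
    · simp [Set.indicator, h1]; field_simp
    · simp [Set.indicator, h1]
  refine h.congr (ae_of_all _ fun x => ?_)
  simp [Set.indicator]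

lemma SchwartzMap.exists_norm_sub_le {E F : Type*} [NormedAddCommGroup E] [NormedSpace ℝ E]
    [NormedAddCommGroup F] [NormedSpace ℝ F] (f : 𝓢(E, F)) :
    ∃ C, 0 ≤ C ∧ ∀ x y, ‖f y - f x‖ ≤ C * ‖y - x‖ := by
  obtain ⟨C, hC0, hC⟩ := f.decay 0 1
  refine ⟨C, hC0.le, fun x y => convex_univ.norm_image_sub_le_of_norm_fderiv_le
    (𝕜 := ℝ) (fun z _ => f.differentiableAt) (fun z _ => ?_) trivial trivial⟩
  simpa [norm_iteratedFDeriv_one] using hC z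

lemma integrable_dipK_mul_sub (Φ : 𝓢(EuclideanSpace ℝ (Fin 3), ℂ)) :
    Integrable fun x => (dipK x : ℂ) *
      (Φ x - (Metric.closedBall 0 1).indicator (fun _ => Φ 0) x) := by
  obtain ⟨C, hC0, hC⟩ := Φ.exists_norm_sub_le
  refine ((integrable_indicator_norm_zpow_neg_two.const_mul (2 * C)).add
    (Φ.integrable.norm.const_mul 2)).mono' ?_ (ae_of_all _ fun x => ?_)
  · refine (Complex.measurable_ofReal.comp measurable_dipK).aestronglyMeasurable.mul
      (Φ.continuous.aestronglyMeasurable.sub ?_)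
    exact aestronglyMeasurable_const.indicator Metric.isClosed_closedBall.measurableSet
  · have hK := abs_dipK_le x
    simp only [norm_mul, Complex.norm_real, Real.norm_eq_abs, Pi.add_apply]
    by_cases hx : x ∈ Metric.closedBall (0 : EuclideanSpace ℝ (Fin 3)) 1
    · rw [Set.indicator_of_mem hx, Set.indicator_of_mem hx]
      have h1 := hC 0 x
      rw [sub_zero] at h1
      calc _ ≤ (2 * ‖x‖ ^ (-3 : ℤ)) * (C * ‖x‖) := by gcongr
        _ = 2 * C * ‖x‖ ^ (-2 : ℤ) := by
          rcases eq_or_ne x 0 with rfl | h0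
          · simp
          · have := norm_ne_zero_iff.2 h0
            rw [show (-2 : ℤ) = -3 + 1 by norm_num, zpow_add_one₀ this]
            ring
        _ ≤ _ := by
          have := norm_nonneg (Φ x)
          linarith
    · rw [Set.indicator_of_notMem hx, Set.indicator_of_notMem hx, sub_zero, mul_zero, zero_add]
      have hx : 1 < ‖x‖ := by simpa using hx
      gcongr
      refine hK.trans ?_
      have : ‖x‖ ^ (-3 : ℤ) ≤ 1 := zpow_le_one_of_nonpos₀ hx.le (by norm_num)
      linarith

lemma integrable_sq_inner_mul {V : Type*} [NormedAddCommGroup V] [InnerProductSpace ℝ V]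
    [FiniteDimensional ℝ V] [MeasurableSpace V] [BorelSpace V] (ψ : 𝓢(V, ℂ)) (v : V) :
    Integrable fun x => (inner ℝ x v : ℂ) ^ 2 * ψ x := by
  refine (smulLeftCLM ℂ (fun x => inner ℝ x v)
    (smulLeftCLM ℂ (fun x => inner ℝ x v) ψ)).integrable.congr (ae_of_all _ fun x => ?_)
  simp only [smulLeftCLM_inner_apply]
  ring

lemma integral_gaussian_mul_sq_inner_mul_fourier {V : Type*} [NormedAddCommGroup V]
    [InnerProductSpace ℝ V] [FiniteDimensional ℝ V] [MeasurableSpace V] [BorelSpace V]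
    {t : ℝ} (ht : 0 < t) (ψ : 𝓢(V, ℂ)) (v : V) :
    ∫ x, (Real.exp (-(Real.pi * t * ‖x‖ ^ 2)) : ℂ) * ((inner ℝ x v : ℂ) ^ 2 * 𝓕 ψ x) =
      -((t ^ (-(Module.finrank ℝ V / 2 : ℝ)) : ℝ) : ℂ) *
        (((t ^ (-2 : ℝ) : ℝ) : ℂ) * (∫ ξ, (Real.exp (-(Real.pi / t * ‖ξ‖ ^ 2)) : ℂ) *
            ((inner ℝ ξ v : ℂ) ^ 2 * ψ ξ)) -
          ‖v‖ ^ 2 / (2 * Real.pi * t) *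
            ∫ ξ, (Real.exp (-(Real.pi / t * ‖ξ‖ ^ 2)) : ℂ) * ψ ξ) := by
  have h := integral_gaussian_mul_fourier ht (∂_{v} (∂_{v} ψ))
  simp only [fourier_lineDerivOp_lineDerivOp_apply, mul_left_comm _ (-(4 * (Real.pi : ℂ) ^ 2)),
    integral_const_mul] at h
  rw [integral_gaussian_mul_lineDerivOp_lineDerivOp (by positivity)] at h
  have hpi := Complex.ofReal_ne_zero.2 Real.pi_ne_zero
  have ht' := Complex.ofReal_ne_zero.2 ht.ne'
  rw [show (-2 : ℝ) = ((-2 : ℤ) : ℝ) by norm_num, Real.rpow_intCast]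
  have h4 : -(4 * (Real.pi : ℂ) ^ 2) ≠ 0 := by simp
  refine mul_left_cancel₀ h4 (h.trans ?_)
  push_cast
  field_simp
  ring

lemma dipoleNumerator_mul_eq (x : EuclideanSpace ℝ (Fin 3)) (z : ℂ) :
    (dipoleNumerator x : ℂ) * z =
      (inner ℝ x (EuclideanSpace.single 0 (1 : ℝ)) : ℂ) ^ 2 * z +
      (inner ℝ x (EuclideanSpace.single 1 (1 : ℝ)) : ℂ) ^ 2 * z -
      2 * ((inner ℝ x (EuclideanSpace.single 2 (1 : ℝ)) : ℂ) ^ 2 * z) := by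
  simp [dipoleNumerator, EuclideanSpace.inner_single_right]
  ring

lemma integrable_dipoleNumerator_mul (ψ : 𝓢(EuclideanSpace ℝ (Fin 3), ℂ)) :
    Integrable fun x => (dipoleNumerator x : ℂ) * ψ x := by
  simp only [dipoleNumerator_mul_eq]
  exact ((integrable_sq_inner_mul ψ _).add (integrable_sq_inner_mul ψ _)).sub
    ((integrable_sq_inner_mul ψ _).const_mul 2)

lemma integral_gaussian_mul_dipoleNumerator {s : ℝ} (hs : 0 ≤ s)
    (ψ : 𝓢(EuclideanSpace ℝ (Fin 3), ℂ)) :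
    ∫ x, (Real.exp (-(s * ‖x‖ ^ 2)) : ℂ) * ((dipoleNumerator x : ℂ) * ψ x) =
      (∫ x, (Real.exp (-(s * ‖x‖ ^ 2)) : ℂ) *
        ((inner ℝ x (EuclideanSpace.single 0 (1 : ℝ)) : ℂ) ^ 2 * ψ x)) +
      (∫ x, (Real.exp (-(s * ‖x‖ ^ 2)) : ℂ) *
        ((inner ℝ x (EuclideanSpace.single 1 (1 : ℝ)) : ℂ) ^ 2 * ψ x)) -
      2 * ∫ x, (Real.exp (-(s * ‖x‖ ^ 2)) : ℂ) *
        ((inner ℝ x (EuclideanSpace.single 2 (1 : ℝ)) : ℂ) ^ 2 * ψ x) := by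
  have hi (j : Fin 3) := integrable_gaussian_mul hs
    (integrable_sq_inner_mul ψ (EuclideanSpace.single j (1 : ℝ)))
  rw [← integral_add (hi 0) (hi 1), ← integral_const_mul,
    ← integral_sub (f := fun x => _ + _) ((hi 0).add (hi 1)) ((hi 2).const_mul 2)]
  refine integral_congr_ae (ae_of_all _ fun x => ?_)
  simp only [dipoleNumerator_mul_eq]
  ring

lemma integral_gaussian_mul_dipoleNumerator_mul_fourier {t : ℝ} (ht : 0 < t)
    (ψ : 𝓢(EuclideanSpace ℝ (Fin 3), ℂ)) :
    ∫ x, (Real.exp (-(Real.pi * t * ‖x‖ ^ 2)) : ℂ) * ((dipoleNumerator x : ℂ) * 𝓕 ψ x) =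
      -((t ^ (-(3 / 2) : ℝ) : ℝ) : ℂ) * (((t ^ (-2 : ℝ) : ℝ) : ℂ) *
        ∫ ξ, (Real.exp (-(Real.pi / t * ‖ξ‖ ^ 2)) : ℂ) * ((dipoleNumerator ξ : ℂ) * ψ ξ)) := by
  rw [integral_gaussian_mul_dipoleNumerator (by positivity),
    integral_gaussian_mul_dipoleNumerator (by positivity)]
  simp only [integral_gaussian_mul_sq_inner_mul_fourier ht, finrank_euclideanSpace_fin,
    PiLp.norm_single]
  norm_num
  ring

lemma dipK_eq (x : EuclideanSpace ℝ (Fin 3)) : dipK x = dipoleNumerator x / ‖x‖ ^ 5 := rfl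

lemma dipm_eq (ξ : EuclideanSpace ℝ (Fin 3)) :
    dipm ξ = -(4 * Real.pi ^ 2 / 3) * (1 / (Real.pi * ‖ξ‖ ^ 2) * dipoleNumerator ξ) := by
  rw [dipm, dipoleNumerator]
  split_ifs with h
  · simp [h]
  · have := norm_ne_zero_iff.2 h
    have := Real.pi_ne_zero
    field_simp
    ring

lemma integrable_dipm_mul (ψ : 𝓢(EuclideanSpace ℝ (Fin 3), ℂ)) :
    Integrable fun ξ => ((1 / (Real.pi * ‖ξ‖ ^ 2) : ℝ) : ℂ) * ((dipoleNumerator ξ : ℂ) * ψ ξ) := by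
  refine (ψ.integrable.norm.const_mul (2 / Real.pi)).mono' ?_ (ae_of_all _ fun ξ => ?_)
  · refine Measurable.aestronglyMeasurable ?_
    have := continuous_dipoleNumerator.measurable
    have := ψ.continuous.measurable
    fun_prop
  · rw [← mul_assoc, norm_mul, ← Complex.ofReal_mul, Complex.norm_real, Real.norm_eq_abs, abs_mul]
    gcongr
    rcases eq_or_ne ξ 0 with rfl | h
    · simp; positivity
    · have h := norm_pos_iff.2 h
      have hpi := Real.pi_pos
      rw [abs_of_nonneg (by positivity)]
      calc _ ≤ 1 / (Real.pi * ‖ξ‖ ^ 2) * (2 * ‖ξ‖ ^ 2) := by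
            gcongr; exact abs_dipoleNumerator_le ξ
        _ = _ := by field_simp

lemma ae_ne_zero_euclideanSpace : ∀ᵐ x : EuclideanSpace ℝ (Fin 3), x ≠ 0 := by
  simp [ae_iff]

lemma integral_dipK_mul_sub_fourier (φ : 𝓢(EuclideanSpace ℝ (Fin 3), ℂ)) :
    ∫ x, (dipK x : ℂ) * (𝓕 φ x - (Metric.closedBall 0 1).indicator (fun _ => 𝓕 φ 0) x) =
      ∫ ξ, (dipm ξ : ℂ) * φ ξ := by
  set f : EuclideanSpace ℝ (Fin 3) → ℂ :=
    fun x => 𝓕 φ x - (Metric.closedBall 0 1).indicator (fun _ => 𝓕 φ 0) x with hf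
  have hpi := Complex.ofReal_ne_zero.2 Real.pi_ne_zero
  have hK (x : EuclideanSpace ℝ (Fin 3)) : (dipK x : ℂ) * f x = 4 * Real.pi ^ 2 / 3 *
      (((3 / (4 * Real.pi ^ 2) / ‖x‖ ^ 5 : ℝ) : ℂ) * (dipoleNumerator x * f x)) := by
    rw [dipK_eq]
    push_cast
    field_simp
  have hKf : Integrable fun x =>
      ((3 / (4 * Real.pi ^ 2) / ‖x‖ ^ 5 : ℝ) : ℂ) * (dipoleNumerator x * f x) := by
    refine ((integrable_dipK_mul_sub (𝓕 φ)).const_mul (3 / (4 * Real.pi ^ 2))).congr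
      (ae_of_all _ fun x => ?_)
    change _ * (_ * f x) = _
    simp only [hK]
    field_simp
  have hball : Integrable fun x : EuclideanSpace ℝ (Fin 3) =>
      (dipoleNumerator x : ℂ) * (Metric.closedBall 0 1).indicator (fun _ => 𝓕 φ 0) x := by
    have h : IntegrableOn (fun x => (dipoleNumerator x : ℂ) * 𝓕 φ 0) (Metric.closedBall 0 1) :=
      ((Complex.continuous_ofReal.comp continuous_dipoleNumerator).mul_const _).continuousOn
        |>.integrableOn_compact (isCompact_closedBall _ _)
    refine (h.integrable_indicator Metric.isClosed_closedBall.measurableSet).congr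
      (ae_of_all _ fun x => ?_)
    classical simp only [Set.indicator_apply, mul_ite, mul_zero]
  have hslice {t : ℝ} (ht : 0 < t) :
      ∫ x, ((t ^ (3 / 2 : ℝ) * Real.exp (-(Real.pi * t * ‖x‖ ^ 2)) : ℝ) : ℂ) *
        (dipoleNumerator x * f x) =
      -∫ ξ, ((t ^ (-2 : ℝ) * Real.exp (-(Real.pi / t * ‖ξ‖ ^ 2)) : ℝ) : ℂ) *
        (dipoleNumerator ξ * φ ξ) := by
    have hpt : 0 ≤ Real.pi * t := by positivity
    have h0 : ∫ x : EuclideanSpace ℝ (Fin 3), (Real.exp (-(Real.pi * t * ‖x‖ ^ 2)) : ℂ) *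
        ((dipoleNumerator x : ℂ) * (Metric.closedBall 0 1).indicator (fun _ => 𝓕 φ 0) x) = 0 := by
      rw [← integral_dipoleNumerator_mul_radial fun r => (Real.exp (-(Real.pi * t * r ^ 2)) : ℂ) *
        (Set.Iic (1 : ℝ)).indicator (fun _ => 𝓕 φ 0) r]
      refine integral_congr_ae (ae_of_all _ fun x => ?_)
      classical
      simp only [Set.indicator_apply, mem_closedBall_zero_iff, Set.mem_Iic]
      split_ifs <;> ring
    have h1 : ∫ x, (Real.exp (-(Real.pi * t * ‖x‖ ^ 2)) : ℂ) * (dipoleNumerator x * f x) =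
        ∫ x, (Real.exp (-(Real.pi * t * ‖x‖ ^ 2)) : ℂ) * (dipoleNumerator x * 𝓕 φ x) := by
      rw [← sub_zero (∫ x, _ * (_ * 𝓕 φ x)), ← h0, ← integral_sub
        (integrable_gaussian_mul hpt (integrable_dipoleNumerator_mul (𝓕 φ)))
        (integrable_gaussian_mul hpt hball)]
      refine integral_congr_ae (ae_of_all _ fun x => ?_)
      simp only [hf]
      ring
    simp only [Complex.ofReal_mul, mul_assoc, integral_const_mul]
    simp only [mul_assoc] at h1
    rw [h1]
    have h2 := integral_gaussian_mul_dipoleNumerator_mul_fourier ht φ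
    simp only [mul_assoc] at h2
    rw [h2, ← mul_assoc, mul_neg, ← Complex.ofReal_mul, ← Real.rpow_add ht]
    norm_num
  change ∫ x, (dipK x : ℂ) * f x = _
  simp only [hK]
  rw [integral_const_mul, integral_superposition_swap
    (k := fun x t => t ^ (3 / 2 : ℝ) * Real.exp (-(Real.pi * t * ‖x‖ ^ 2)))
    (by simp only [Function.uncurry_def]; fun_prop)
    (fun x t ht => by positivity)
    (ae_ne_zero_euclideanSpace.mono fun x hx =>
      (integral_rpow_mul_exp_neg_pi (norm_pos_iff.2 hx)).1)
    (ae_ne_zero_euclideanSpace.mono fun x hx =>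
      (integral_rpow_mul_exp_neg_pi (norm_pos_iff.2 hx)).2) ?_ hKf,
    setIntegral_congr_fun measurableSet_Ioi fun t ht => hslice ht, integral_neg,
    ← integral_superposition_swap (κ := fun x => 1 / (Real.pi * ‖x‖ ^ 2))
      (k := fun x t => t ^ (-2 : ℝ) * Real.exp (-(Real.pi / t * ‖x‖ ^ 2)))
    (by simp only [Function.uncurry_def]; fun_prop)
    (fun x t ht => by positivity)
    (ae_ne_zero_euclideanSpace.mono fun x hx =>
      (integral_rpow_neg_two_mul_exp_neg_pi_div (norm_pos_iff.2 hx)).1)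
    (ae_ne_zero_euclideanSpace.mono fun x hx =>
      (integral_rpow_neg_two_mul_exp_neg_pi_div (norm_pos_iff.2 hx)).2)
    (integrable_dipoleNumerator_mul φ).aestronglyMeasurable (integrable_dipm_mul φ),
    ← integral_neg, ← integral_const_mul]
  · refine integral_congr_ae (ae_of_all _ fun ξ => ?_)
    simp only [dipm_eq]
    push_cast
    ring
  · have h := ((integrable_dipoleNumerator_mul (𝓕 φ)).sub hball).aestronglyMeasurable
    refine h.congr (ae_of_all _ fun x => ?_)
    simp only [hf, Pi.sub_apply]
    ring

lemma measurableSet_le_norm (ε : ℝ) : MeasurableSet {x : EuclideanSpace ℝ (Fin 3) | ε ≤ ‖x‖} :=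
  measurableSet_le measurable_const measurable_norm

lemma integrableOn_dipK_mul {ε : ℝ} (hε : 0 < ε) (Φ : 𝓢(EuclideanSpace ℝ (Fin 3), ℂ)) :
    IntegrableOn (fun x => (dipK x : ℂ) * Φ x)
      {x : EuclideanSpace ℝ (Fin 3) | ε ≤ ‖x‖} := by
  refine Φ.integrable.integrableOn.bdd_mul (c := 2 * ε ^ (-3 : ℤ))
    (Complex.measurable_ofReal.comp measurable_dipK).aestronglyMeasurable ?_
  filter_upwards [ae_restrict_mem (measurableSet_le_norm ε)] with x hx
  rw [Complex.norm_real, Real.norm_eq_abs]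
  refine (abs_dipK_le x).trans ?_
  rw [zpow_neg, zpow_neg]
  have : ε ^ (3 : ℤ) ≤ ‖x‖ ^ (3 : ℤ) := zpow_le_zpow_left₀ (by norm_num) hε.le hx
  gcongr

lemma setIntegral_dipK_mul_eq {ε : ℝ} (hε : 0 < ε) (Φ : 𝓢(EuclideanSpace ℝ (Fin 3), ℂ)) :
    ∫ x in {x : EuclideanSpace ℝ (Fin 3) | ε ≤ ‖x‖}, (dipK x : ℂ) * Φ x =
      ∫ x in {x : EuclideanSpace ℝ (Fin 3) | ε ≤ ‖x‖}, (dipK x : ℂ) *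
        (Φ x - (Metric.closedBall 0 1).indicator (fun _ => Φ 0) x) := by
  rw [← sub_eq_zero, ← integral_sub (integrableOn_dipK_mul hε Φ)
    (integrable_dipK_mul_sub Φ).integrableOn, ← integral_indicator (measurableSet_le_norm ε),
    ← integral_dipoleNumerator_mul_radial fun r => (Set.Ici ε).indicator
      (fun r => (Set.Iic (1 : ℝ)).indicator (fun _ => Φ 0) r / (r : ℂ) ^ 5) r]
  refine integral_congr_ae (ae_of_all _ fun x => ?_)
  classical
  simp only [dipK_eq, Set.indicator_apply, mem_closedBall_zero_iff, Set.mem_Iic, Set.mem_Ici,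
    Set.mem_ofPred_eq]
  split_ifs <;> push_cast <;> ring

/-- The Fourier transform of the dipolar kernel `K`, in the principal value /
tempered distribution sense, is the dipolar symbol `m`. -/
theorem fourier_transform_dipolar_kernel
    (φ : SchwartzMap (EuclideanSpace ℝ (Fin 3)) ℂ) :
    (∀ ε : ℝ, 0 < ε →
      IntegrableOn (fun x => (dipK x : ℂ) * 𝓕 (⇑φ) x)
        {x : EuclideanSpace ℝ (Fin 3) | ε ≤ ‖x‖} volume) ∧
    Tendsto (fun ε : ℝ =>
        ∫ x in {x : EuclideanSpace ℝ (Fin 3) | ε ≤ ‖x‖}, (dipK x : ℂ) * 𝓕 (⇑φ) x)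
      (nhdsWithin 0 (Set.Ioi 0))
      (nhds (∫ ξ, (dipm ξ : ℂ) * φ ξ)) := by
  refine ⟨fun ε hε => integrableOn_dipK_mul hε (𝓕 φ), ?_⟩
  have hcover : AECover volume (nhdsWithin (0 : ℝ) (Set.Ioi 0))
      fun ε => {x : EuclideanSpace ℝ (Fin 3) | ε ≤ ‖x‖} := by
    refine ⟨?_, measurableSet_le_norm⟩
    filter_upwards [ae_ne_zero_euclideanSpace] with x hx
    exact mem_nhdsWithin_of_mem_nhds (Iic_mem_nhds (norm_pos_iff.2 hx))
  have h := hcover.integral_tendsto_of_countably_generated (integrable_dipK_mul_sub (𝓕 φ))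
  rw [integral_dipK_mul_sub_fourier] at h
  refine h.congr' ?_
  filter_upwards [self_mem_nhdsWithin] with ε hε
  exact (setIntegral_dipK_mul_eq hε (𝓕 φ)).symm

end
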